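/- Let X_1, X_2, … be i.i.d. isotropic random vectors in ℝ^d (centered with identity covariance) whose common law ν_1 has finite Poincaré constant, and let ν_n be the law of (1/√n) Σ_{i=1}^n X_i. Then for every n ≥ 0, C_p(ν_{2^n}) − 3/2 ≤ (3/4)^n (C_p(ν_1) − 3/2). -/

import Mathlib

open MeasureTheory ProbabilityTheory ENNReal

/-- The Poincaré constant of a Borel probability measure on `ℝ^d`: the smallest constant `C`
such that `Var_μ(f) ≤ C ∫ |∇f|² dμ` for all locally Lipschitz `f : ℝ^d → ℝ`
(`+∞` if no finite constant works). -/
noncomputable def poincareConst {d : ℕ} (μ : Measure (EuclideanSpace ℝ (Fin d))) : ℝ≥0∞ :=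
  sInf {C : ℝ≥0∞ | ∀ f : EuclideanSpace ℝ (Fin d) → ℝ, LocallyLipschitz f →
    evariance f μ ≤ C * ∫⁻ x, ‖gradient f x‖₊ ^ 2 ∂μ}

/-- The law of the standardized sum `(1/√n) ∑_{i=1}^n X_i` of `n` i.i.d. random vectors with
common law `ν₁`. -/
noncomputable def stdSumLaw {d : ℕ} (ν₁ : Measure (EuclideanSpace ℝ (Fin d))) (n : ℕ) :
    Measure (EuclideanSpace ℝ (Fin d)) :=
  Measure.map (fun x : Fin n → EuclideanSpace ℝ (Fin d) => (Real.sqrt n)⁻¹ • ∑ i, x i)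
    (Measure.pi fun _ : Fin n => ν₁)

/-- A probability measure on `ℝ^d` is isotropic if it has finite second moments, is centered,
and has identity covariance matrix. -/
def IsIsotropic {d : ℕ} (μ : Measure (EuclideanSpace ℝ (Fin d))) : Prop :=
  Integrable (fun x => ‖x‖ ^ 2) μ ∧ (∫ x, x ∂μ) = 0 ∧
    ∀ i j : Fin d, ∫ x, x i * x j ∂μ = if i = j then (1 : ℝ) else 0


/-!
Let `μ` satisfy the Poincaré inequality with constant `C`, let `X` and `Y` be independent of law
`μ`, and put `U(x, y) = f((x + y) / √2)`. Applying the inequality in `x` to the slices `U(·, y)` and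
to their mean, and using `∫ ‖∫ V dy‖² dx + ∫ ‖∫ V dx‖² dy ≤ ∫ ‖V‖² + ‖∫ V‖²` for
`V(x, y) = ∇f((x + y) / √2)`, one finds, under the law of `(X + Y) / √2`,
`Var f ≤ C (3/4 ∫ ‖∇f‖² + 1/4 ‖∫ ∇f‖²)`.

Let `K` be the optimal constant for the law of `(X + Y) / √2`. If the covariance is the identity,
the Cauchy-Schwarz inequality for the nonnegative form `K ∫ ⟪∇u, ∇v⟫ - Cov(u, v)`, tested against
linear functions, shows that near-extremal `f` satisfy `K ‖∫ ∇f‖ ≤ √(Var f)` up to a small error.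
Hence `K² ≤ C (3K/4 + 1/4)`, which gives `K ≤ 3C/4 + 1/3`, and the claim follows by iteration.
-/
section SquareIntegrable

variable {α β H : Type*} [MeasurableSpace α] [MeasurableSpace β] [NormedAddCommGroup H]
  {μ : Measure α} {ρ : Measure β}

theorem memLp_two_iff_lintegral_ne_top {f : α → H} (hf : AEStronglyMeasurable f μ) :
    MemLp f 2 μ ↔ ∫⁻ x, ‖f x‖₊ ^ 2 ∂μ ≠ ∞ := by
  have hsq : AEStronglyMeasurable (fun x => ‖f x‖ ^ 2) μ := hf.norm.pow 2
  rw [memLp_two_iff_integrable_sq_norm hf, Integrable, and_iff_right hsq,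
    hasFiniteIntegral_iff_enorm, lt_top_iff_ne_top]
  simp only [enorm_eq_nnnorm, nnnorm_pow, nnnorm_norm, ENNReal.coe_pow]

theorem ofReal_integral_norm_sq {f : α → H} (hf : MemLp f 2 μ) :
    ENNReal.ofReal (∫ x, ‖f x‖ ^ 2 ∂μ) = ∫⁻ x, ‖f x‖₊ ^ 2 ∂μ := by
  rw [ofReal_integral_eq_lintegral_ofReal (hf.integrable_norm_pow two_ne_zero)
    (.of_forall fun x => by positivity)]
  simp only [ENNReal.ofReal_pow (norm_nonneg _), ofReal_norm, enorm_eq_nnnorm]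

theorem ae_memLp_prodMk_right [SFinite μ] [SFinite ρ] {f : α × β → H}
    (hf : MemLp f 2 (μ.prod ρ)) : ∀ᵐ x ∂μ, MemLp (fun y => f (x, y)) 2 ρ := by
  filter_upwards [hf.1.prodMk_left, (hf.integrable_norm_pow two_ne_zero).prod_right_ae] with x hm hi
  exact (memLp_two_iff_integrable_sq_norm hm).2 hi

theorem ae_memLp_prodMk_left [SFinite μ] [SFinite ρ] {f : α × β → H}
    (hf : MemLp f 2 (μ.prod ρ)) : ∀ᵐ y ∂ρ, MemLp (fun x => f (x, y)) 2 μ :=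
  ae_memLp_prodMk_right (hf.comp_measurePreserving Measure.measurePreserving_swap)

theorem memLp_prod_fst_add_snd [SFinite μ] [IsProbabilityMeasure ρ] {f : α × β → H}
    (hf : MemLp f 2 (μ.prod ρ)) :
    MemLp (fun p : α × β × β => f (p.1, p.2.1) + f (p.1, p.2.2)) 2 (μ.prod (ρ.prod ρ)) :=
  (hf.comp_measurePreserving ((MeasurePreserving.id μ).prod measurePreserving_fst)).add
    (hf.comp_measurePreserving ((MeasurePreserving.id μ).prod measurePreserving_snd))

variable [InnerProductSpace ℝ H]

theorem integrable_inner_of_memLp_two {f g : α → H} (hf : MemLp f 2 μ) (hg : MemLp g 2 μ) :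
    Integrable (fun x => inner ℝ (f x) (g x)) μ :=
  (hf.norm.integrable_mul hg.norm).mono' (hf.1.inner hg.1)
    (.of_forall fun x => norm_inner_le_norm (f x) (g x))

theorem integral_norm_add_smul_sq {f g : α → H} (hf : MemLp f 2 μ) (hg : MemLp g 2 μ) (t : ℝ) :
    ∫ x, ‖f x + t • g x‖ ^ 2 ∂μ =
      ∫ x, ‖f x‖ ^ 2 ∂μ + 2 * t * ∫ x, inner ℝ (f x) (g x) ∂μ + t ^ 2 * ∫ x, ‖g x‖ ^ 2 ∂μ := by
  have expand : ∀ x, ‖f x + t • g x‖ ^ 2 =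
      ‖f x‖ ^ 2 + 2 * t * inner ℝ (f x) (g x) + t ^ 2 * ‖g x‖ ^ 2 := fun x => by
    rw [norm_add_sq_real, inner_smul_right, norm_smul, mul_pow, Real.norm_eq_abs, sq_abs]
    ring
  have hff := hf.integrable_norm_pow two_ne_zero
  have hfg := (integrable_inner_of_memLp_two hf hg).const_mul (2 * t)
  have hgg := (hg.integrable_norm_pow two_ne_zero).const_mul (t ^ 2)
  have hsum : Integrable (fun x => ‖f x‖ ^ 2 + 2 * t * inner ℝ (f x) (g x)) μ := hff.add hfg
  simp_rw [expand]
  rw [integral_add hsum hgg, integral_add hff hfg, integral_const_mul, integral_const_mul]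

variable [CompleteSpace H]

theorem integral_norm_sub_integral_sq [IsProbabilityMeasure μ] {f : α → H} (hf : MemLp f 2 μ) :
    ∫ x, ‖f x - ∫ y, f y ∂μ‖ ^ 2 ∂μ = ∫ x, ‖f x‖ ^ 2 ∂μ - ‖∫ x, f x ∂μ‖ ^ 2 := by
  have expand := integral_norm_add_smul_sq hf (memLp_const (∫ y, f y ∂μ)) (-1)
  have cross : ∫ x, inner ℝ (f x) (∫ y, f y ∂μ) ∂μ = ‖∫ x, f x ∂μ‖ ^ 2 := by
    simp_rw [real_inner_comm (∫ y, f y ∂μ)]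
    rw [integral_inner (hf.integrable one_le_two), real_inner_self_eq_norm_sq]
  simp only [neg_one_smul, ← sub_eq_add_neg, cross, integral_const, probReal_univ, one_smul]
    at expand
  linarith

theorem norm_integral_sq_le [IsProbabilityMeasure μ] {f : α → H} (hf : MemLp f 2 μ) :
    ‖∫ x, f x ∂μ‖ ^ 2 ≤ ∫ x, ‖f x‖ ^ 2 ∂μ := by
  rw [← sub_nonneg, ← integral_norm_sub_integral_sq hf]
  exact integral_nonneg fun x => by positivity

theorem memLp_integral_prodMk_right [SFinite μ] [IsProbabilityMeasure ρ] {f : α × β → H}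
    (hf : MemLp f 2 (μ.prod ρ)) : MemLp (fun x => ∫ y, f (x, y) ∂ρ) 2 μ := by
  have hm : AEStronglyMeasurable (fun x => ∫ y, f (x, y) ∂ρ) μ := hf.1.integral_prod_right'
  refine (memLp_two_iff_integrable_sq_norm hm).2
    ((hf.integrable_norm_pow two_ne_zero).integral_prod_left.mono' (hm.norm.pow 2) ?_)
  filter_upwards [ae_memLp_prodMk_right hf] with x hx
  rw [norm_pow, norm_norm]
  exact norm_integral_sq_le hx

theorem memLp_integral_prodMk_left [IsProbabilityMeasure μ] [SFinite ρ] {f : α × β → H}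
    (hf : MemLp f 2 (μ.prod ρ)) : MemLp (fun y => ∫ x, f (x, y) ∂μ) 2 ρ :=
  memLp_integral_prodMk_right (hf.comp_measurePreserving Measure.measurePreserving_swap)

theorem integral_prod_norm_sub_integral_sq [SFinite μ] [IsProbabilityMeasure ρ] {f : α × β → H}
    (hf : MemLp f 2 (μ.prod ρ)) :
    ∫ p, ‖f p - ∫ y, f (p.1, y) ∂ρ‖ ^ 2 ∂(μ.prod ρ) =
      ∫ p, ‖f p‖ ^ 2 ∂(μ.prod ρ) - ∫ x, ‖∫ y, f (x, y) ∂ρ‖ ^ 2 ∂μ := by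
  have hmean := memLp_integral_prodMk_right hf
  have hres : MemLp (fun p : α × β => f p - ∫ y, f (p.1, y) ∂ρ) 2 (μ.prod ρ) :=
    hf.sub (hmean.comp_fst ρ)
  have hsq := hf.integrable_norm_pow two_ne_zero
  rw [integral_prod _ (hres.integrable_norm_pow two_ne_zero),
    integral_prod _ hsq,
    ← integral_sub hsq.integral_prod_left (hmean.integrable_norm_pow two_ne_zero)]
  refine integral_congr_ae ?_
  filter_upwards [ae_memLp_prodMk_right hf] with x hx using integral_norm_sub_integral_sq hx

theorem integral_norm_integral_sq_add_le [IsProbabilityMeasure μ] [IsProbabilityMeasure ρ]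
    {f : α × β → H} (hf : MemLp f 2 (μ.prod ρ)) :
    ∫ x, ‖∫ y, f (x, y) ∂ρ‖ ^ 2 ∂μ + ∫ y, ‖∫ x, f (x, y) ∂μ‖ ^ 2 ∂ρ ≤
      ∫ p, ‖f p‖ ^ 2 ∂(μ.prod ρ) + ‖∫ p, f p ∂(μ.prod ρ)‖ ^ 2 := by
  have hf₁ := memLp_integral_prodMk_right hf
  have hf₂ := memLp_integral_prodMk_left hf
  have hres : MemLp (fun p : α × β => f p - ∫ y, f (p.1, y) ∂ρ) 2 (μ.prod ρ) :=
    hf.sub (hf₁.comp_fst ρ)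
  have mean_residual : ∀ᵐ y ∂ρ, ∫ x, (f (x, y) - ∫ z, f (x, z) ∂ρ) ∂μ =
      ∫ x, f (x, y) ∂μ - ∫ z, ∫ x, f (x, z) ∂μ ∂ρ := by
    filter_upwards [ae_memLp_prodMk_left hf] with y hy
    rw [integral_sub (hy.integrable one_le_two) (hf₁.integrable one_le_two),
      integral_integral_swap (f := fun x y => f (x, y)) (hf.integrable one_le_two)]
  have jensen : ∫ y, ‖∫ x, (f (x, y) - ∫ z, f (x, z) ∂ρ) ∂μ‖ ^ 2 ∂ρ ≤
      ∫ p, ‖f p - ∫ z, f (p.1, z) ∂ρ‖ ^ 2 ∂(μ.prod ρ) := by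
    have hsq := hres.integrable_norm_pow two_ne_zero
    rw [integral_prod_symm _ hsq]
    refine integral_mono_ae
      ((memLp_integral_prodMk_left hres).integrable_norm_pow two_ne_zero)
      hsq.integral_prod_right ?_
    filter_upwards [ae_memLp_prodMk_left hres] with y hy using norm_integral_sq_le hy
  rw [integral_congr_ae (mean_residual.mono fun y hy => by rw [hy]),
    integral_norm_sub_integral_sq hf₂, integral_prod_norm_sub_integral_sq hf,
    ← integral_prod_symm _ (hf.integrable one_le_two)] at jensen
  linarith

theorem integral_prod_norm_add_sq [IsProbabilityMeasure ρ] {f : β → H} (hf : MemLp f 2 ρ) :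
    ∫ q, ‖f q.1 + f q.2‖ ^ 2 ∂(ρ.prod ρ) = 2 * ∫ y, ‖f y‖ ^ 2 ∂ρ + 2 * ‖∫ y, f y ∂ρ‖ ^ 2 := by
  have hfst := hf.comp_fst ρ
  have hsnd := hf.comp_snd ρ
  have expand := integral_norm_add_smul_sq hfst hsnd 1
  have hi := hf.integrable one_le_two
  have cross : ∫ q : β × β, inner ℝ (f q.1) (f q.2) ∂(ρ.prod ρ) = ‖∫ y, f y ∂ρ‖ ^ 2 := by
    rw [integral_prod _ (integrable_inner_of_memLp_two hfst hsnd)]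
    simp_rw [integral_inner hi, real_inner_comm (∫ y, f y ∂ρ)]
    rw [integral_inner hi, real_inner_self_eq_norm_sq]
  simp only [one_smul, cross, integral_fun_fst (fun y => ‖f y‖ ^ 2),
    integral_fun_snd (fun y => ‖f y‖ ^ 2), probReal_univ] at expand
  linarith

theorem integral_integral_norm_add_sq [SFinite μ] [IsProbabilityMeasure ρ] {f : α × β → H}
    (hf : MemLp f 2 (μ.prod ρ)) :
    ∫ q, ∫ x, ‖f (x, q.1) + f (x, q.2)‖ ^ 2 ∂μ ∂(ρ.prod ρ) =
      2 * ∫ p, ‖f p‖ ^ 2 ∂(μ.prod ρ) + 2 * ∫ x, ‖∫ y, f (x, y) ∂ρ‖ ^ 2 ∂μ := by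
  have hsq := hf.integrable_norm_pow two_ne_zero
  have hpair := (memLp_prod_fst_add_snd hf).integrable_norm_pow two_ne_zero
  have hmean := (memLp_integral_prodMk_right hf).integrable_norm_pow two_ne_zero
  rw [← integral_integral_swap hpair, integral_prod _ hsq, ← integral_const_mul,
    ← integral_const_mul, ← integral_add (hsq.integral_prod_left.const_mul 2) (hmean.const_mul 2)]
  refine integral_congr_ae ?_
  filter_upwards [ae_memLp_prodMk_right hf] with x hx using integral_prod_norm_add_sq hx

end SquareIntegrable

section Variance

variable {α β : Type*} [MeasurableSpace α] [MeasurableSpace β] {μ : Measure α} {ρ : Measure β}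

theorem variance_add_mul [IsProbabilityMeasure μ] {u v : α → ℝ} (hu : MemLp u 2 μ)
    (hv : MemLp v 2 μ) (t : ℝ) :
    Var[fun x => u x + t * v x; μ] = Var[u; μ] + 2 * t * cov[u, v; μ] + t ^ 2 * Var[v; μ] := by
  rw [variance_fun_add hu (hv.const_mul t), covariance_const_mul_right, variance_const_mul]
  ring

theorem sq_covariance_le [IsProbabilityMeasure μ] {u v : α → ℝ} (hu : MemLp u 2 μ)
    (hv : MemLp v 2 μ) : cov[u, v; μ] ^ 2 ≤ Var[u; μ] * Var[v; μ] := by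
  have nonneg : ∀ t : ℝ, 0 ≤ Var[v; μ] * (t * t) + 2 * cov[u, v; μ] * t + Var[u; μ] := fun t => by
    linarith [variance_add_mul hu hv t, variance_nonneg (fun x => u x + t * v x) μ]
  linarith [discrim_le_zero nonneg, show discrim Var[v; μ] (2 * cov[u, v; μ]) Var[u; μ] =
    4 * (cov[u, v; μ] ^ 2 - Var[u; μ] * Var[v; μ]) by rw [discrim]; ring]

theorem memLp_sub_integral_of_lintegral_evariance_ne_top [SFinite μ] [SFinite ρ] {U : α × β → ℝ}
    (hU : Measurable U) (h : ∫⁻ x, evariance (fun y => U (x, y)) ρ ∂μ ≠ ∞) :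
    MemLp (fun p : α × β => U p - ∫ y, U (p.1, y) ∂ρ) 2 (μ.prod ρ) := by
  have hmean : Measurable fun x => ∫ y, U (x, y) ∂ρ :=
    hU.stronglyMeasurable.integral_prod_right'.measurable
  have hsub : Measurable fun p : α × β => U p - ∫ y, U (p.1, y) ∂ρ :=
    hU.sub (hmean.comp measurable_fst)
  rw [memLp_two_iff_lintegral_ne_top hsub.aestronglyMeasurable,
    lintegral_prod _ (hsub.nnnorm.coe_nnreal_ennreal.pow_const 2).aemeasurable]
  exact h

theorem memLp_prod_of_lintegral_evariance_ne_top [IsProbabilityMeasure μ] [IsProbabilityMeasure ρ]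
    {U : α × β → ℝ} (hU : Measurable U)
    (h₁ : ∫⁻ x, evariance (fun y => U (x, y)) ρ ∂μ ≠ ∞)
    (h₂ : ∫⁻ y, evariance (fun x => U (x, y)) μ ∂ρ ≠ ∞) : MemLp U 2 (μ.prod ρ) := by
  have hsub₁ := memLp_sub_integral_of_lintegral_evariance_ne_top hU h₁
  have hsub₂ : MemLp (fun p : α × β => U p - ∫ x, U (x, p.2) ∂μ) 2 (μ.prod ρ) :=
    (memLp_sub_integral_of_lintegral_evariance_ne_top (hU.comp measurable_swap)
      h₂).comp_measurePreserving Measure.measurePreserving_swap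
  have hdiff : MemLp (fun p : α × β => ∫ y, U (p.1, y) ∂ρ - ∫ x, U (x, p.2) ∂μ) 2 (μ.prod ρ) :=
    (hsub₂.sub hsub₁).ae_eq (.of_forall fun p => sub_sub_sub_cancel_left _ _ _)
  obtain ⟨y, hy⟩ := (ae_memLp_prodMk_left hdiff).exists
  have hmean : MemLp (fun x => ∫ y, U (x, y) ∂ρ) 2 μ :=
    (hy.add (memLp_const (∫ x, U (x, y) ∂μ))).ae_eq (.of_forall fun x => sub_add_cancel _ _)
  exact (hsub₁.add (hmean.comp_fst ρ)).ae_eq (.of_forall fun p => sub_add_cancel _ _)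

theorem variance_eq_integral_norm_sq_sub [IsProbabilityMeasure μ] {u : α → ℝ}
    (hu : MemLp u 2 μ) : Var[u; μ] = ∫ x, ‖u x‖ ^ 2 ∂μ - ‖∫ x, u x ∂μ‖ ^ 2 := by
  rw [variance_eq_sub hu]
  simp only [Real.norm_eq_abs, sq_abs, Pi.pow_apply]

theorem integral_variance_add_prodMk [IsProbabilityMeasure μ] [IsProbabilityMeasure ρ]
    {U : α × β → ℝ} (hU : MemLp U 2 (μ.prod ρ)) :
    ∫ q, Var[fun x => U (x, q.1) + U (x, q.2); μ] ∂(ρ.prod ρ) =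
      2 * (Var[U; μ.prod ρ] + Var[fun x => ∫ y, U (x, y) ∂ρ; μ]
        - Var[fun y => ∫ x, U (x, y) ∂μ; ρ]) := by
  have hmean₁ := memLp_integral_prodMk_right hU
  have hmean₂ := memLp_integral_prodMk_left hU
  have hint := hU.integrable one_le_two
  have slices : ∀ᵐ y ∂ρ, MemLp (fun x => U (x, y)) 2 μ := ae_memLp_prodMk_left hU
  have slice_variance : ∀ᵐ q ∂(ρ.prod ρ), Var[fun x => U (x, q.1) + U (x, q.2); μ] =
      ∫ x, ‖U (x, q.1) + U (x, q.2)‖ ^ 2 ∂μ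
        - ‖∫ x, U (x, q.1) ∂μ + ∫ x, U (x, q.2) ∂μ‖ ^ 2 := by
    filter_upwards [Measure.quasiMeasurePreserving_fst.ae slices,
      Measure.quasiMeasurePreserving_snd.ae slices] with q h₁ h₂
    rw [← integral_add (h₁.integrable one_le_two) (h₂.integrable one_le_two)]
    exact variance_eq_integral_norm_sq_sub (h₁.add h₂)
  have hpair := (memLp_prod_fst_add_snd hU).integrable_norm_pow two_ne_zero
  have hmean_pair : MemLp (fun q : β × β => ∫ x, U (x, q.1) ∂μ + ∫ x, U (x, q.2) ∂μ) 2
      (ρ.prod ρ) := (hmean₂.comp_fst ρ).add (hmean₂.comp_snd ρ)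
  rw [integral_congr_ae slice_variance,
    integral_sub hpair.integral_prod_right (hmean_pair.integrable_norm_pow two_ne_zero),
    integral_integral_norm_add_sq hU, integral_prod_norm_add_sq hmean₂,
    variance_eq_integral_norm_sq_sub hU, variance_eq_integral_norm_sq_sub hmean₁,
    variance_eq_integral_norm_sq_sub hmean₂, integral_prod _ hint,
    integral_integral_swap (f := fun x y => U (x, y)) hint]
  ring

theorem evariance_le_mul_lintegral_iff [IsFiniteMeasure μ] {H : Type*} [NormedAddCommGroup H]
    {u : α → ℝ} {G : α → H} (hu : AEStronglyMeasurable u μ) (hG : MemLp G 2 μ) (C : NNReal) :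
    evariance u μ ≤ C * ∫⁻ x, ‖G x‖₊ ^ 2 ∂μ ↔
      MemLp u 2 μ ∧ Var[u; μ] ≤ C * ∫ x, ‖G x‖ ^ 2 ∂μ := by
  rw [← ofReal_integral_norm_sq hG, ← ENNReal.ofReal_coe_nnreal, ← ENNReal.ofReal_mul C.coe_nonneg]
  have hnonneg : 0 ≤ C * ∫ x, ‖G x‖ ^ 2 ∂μ :=
    mul_nonneg C.coe_nonneg (integral_nonneg fun x => by positivity)
  constructor
  · intro h
    have hmem := (evariance_lt_top_iff_memLp hu).1 (h.trans_lt ENNReal.ofReal_lt_top)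
    rw [← hmem.ofReal_variance_eq, ENNReal.ofReal_le_ofReal_iff hnonneg] at h
    exact ⟨hmem, h⟩
  · rintro ⟨hmem, h⟩
    rw [← hmem.ofReal_variance_eq]
    exact ENNReal.ofReal_le_ofReal h

end Variance

section Gradient

variable {E : Type*} [NormedAddCommGroup E] [InnerProductSpace ℝ E]

theorem locallyLipschitz_comp_smul_add {f : E → ℝ} (hf : LocallyLipschitz f) (c : ℝ) (y : E) :
    LocallyLipschitz fun x => f (c • (x + y)) :=
  hf.comp ((lipschitzWith_smul c).comp
    (LipschitzWith.id.add (LipschitzWith.const y))).locallyLipschitz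

variable [CompleteSpace E]

theorem gradient_inner (b x : E) : gradient (fun x => inner ℝ b x) x = b :=
  HasGradientAt.gradient (InnerProductSpace.toDual ℝ E b).hasFDerivAt

theorem norm_gradient_add_mul_le {u v : E → ℝ} {t : ℝ} {x : E}
    (h : DifferentiableAt ℝ (fun x => u x + t * v x) x → DifferentiableAt ℝ v x) :
    ‖gradient (fun x => u x + t * v x) x‖ ≤ ‖gradient u x + t • gradient v x‖ := by
  by_cases hw : DifferentiableAt ℝ (fun x => u x + t * v x) x
  · have hv := h hw
    have hu : DifferentiableAt ℝ u x :=
      (hw.sub (hv.const_mul t)).congr_of_eventuallyEq (.of_forall fun y => by simp)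
    have hgrad : HasGradientAt (fun x => u x + t * v x) (gradient u x + t • gradient v x) x := by
      rw [hasGradientAt_iff_hasFDerivAt, map_add, map_smul]
      exact hu.hasGradientAt.hasFDerivAt.add (hv.hasGradientAt.hasFDerivAt.const_mul t)
    rw [hgrad.gradient]
  · rw [gradient_eq_zero_of_not_differentiableAt hw, norm_zero]
    exact norm_nonneg _

theorem gradient_comp_smul_add (f : E → ℝ) (c : ℝ) (x y : E) :
    gradient (fun x => f (c • (x + y))) x = c • gradient f (c • (x + y)) := by
  rw [gradient, fderiv_comp_add_right (f := fun x => f (c • x)), fderiv_comp_smul, map_smulₛₗ,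
    conj_trivial, gradient]

variable [MeasurableSpace E] [BorelSpace E]

theorem measurable_gradient (f : E → ℝ) : Measurable (gradient f) :=
  (InnerProductSpace.toDual ℝ E).symm.continuous.measurable.comp (measurable_fderiv ℝ f)

/- Where `u + t • v` is differentiable and `v` is not, no `u + s • v` with `s ≠ t` is
differentiable, so these sets are disjoint for distinct `t` and only countably many are charged. -/
theorem countable_not_ae_norm_gradient_add_mul_le {μ : Measure E} [IsFiniteMeasure μ]
    (u v : E → ℝ) :
    {t : ℝ | ¬ ∀ᵐ x ∂μ, ‖gradient (fun x => u x + t * v x) x‖ ≤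
      ‖gradient u x + t • gradient v x‖}.Countable := by
  let bad : ℝ → Set E := fun t =>
    {x | DifferentiableAt ℝ (fun x => u x + t * v x) x} \ {x | DifferentiableAt ℝ v x}
  have measurable_bad : ∀ t, MeasurableSet (bad t) := fun t =>
    (measurableSet_of_differentiableAt ℝ _).diff (measurableSet_of_differentiableAt ℝ _)
  have disjoint_bad : Pairwise (Function.onFun Disjoint bad) := fun s t hst => by
    refine Set.disjoint_left.2 fun x hs ht => hs.2 ?_
    have hdiff := (hs.1.sub ht.1).const_mul (s - t)⁻¹
    refine hdiff.congr_of_eventuallyEq (.of_forall fun y => ?_)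
    have : s - t ≠ 0 := sub_ne_zero.2 hst
    simp only [Pi.sub_apply]
    field_simp
    ring
  refine (Measure.countable_meas_pos_of_disjoint_iUnion (μ := μ) measurable_bad
    disjoint_bad).mono fun t ht => show 0 < μ (bad t) from pos_iff_ne_zero.2 fun null => ht ?_
  filter_upwards [measure_eq_zero_iff_ae_notMem.1 null] with x hx
  exact norm_gradient_add_mul_le fun hw => not_not.1 fun hv => hx ⟨hw, hv⟩

end Gradient

section PoincareInequality

open scoped NNReal

variable {E : Type*} [NormedAddCommGroup E] [InnerProductSpace ℝ E] [CompleteSpace E]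
  [MeasurableSpace E]

/-- The Poincaré inequality with constant `C` for locally Lipschitz functions of finite energy.
Square integrability is part of the conclusion because `Var[f; μ]` is `0` without it. -/
def PoincareInequality (μ : Measure E) (C : ℝ≥0) : Prop :=
  ∀ f : E → ℝ, LocallyLipschitz f → MemLp (gradient f) 2 μ →
    MemLp f 2 μ ∧ Var[f; μ] ≤ C * ∫ x, ‖gradient f x‖ ^ 2 ∂μ

variable {β : Type*} [MeasurableSpace β] {μ : Measure E} {ρ : Measure β} {C : ℝ≥0} {U : E × β → ℝ}

namespace PoincareInequality

theorem lintegral_evariance_ne_top [IsProbabilityMeasure μ] [SFinite ρ]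
    (h : PoincareInequality μ C) (hlip : ∀ y, LocallyLipschitz fun x => U (x, y))
    (hgrad : MemLp (fun p : E × β => gradient (fun x => U (x, p.2)) p.1) 2 (μ.prod ρ)) :
    ∫⁻ y, evariance (fun x => U (x, y)) μ ∂ρ ≠ ∞ := by
  have henergy := (hgrad.integrable_norm_pow two_ne_zero).integral_prod_right.const_mul (C : ℝ)
  refine ne_top_of_le_ne_top henergy.lintegral_lt_top.ne (lintegral_mono_ae ?_)
  filter_upwards [ae_memLp_prodMk_left hgrad] with y hy
  obtain ⟨hmem, hvar⟩ := h _ (hlip y) hy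
  rw [← hmem.ofReal_variance_eq]
  exact ENNReal.ofReal_le_ofReal hvar

variable [BorelSpace E] [SecondCountableTopology E] {u v : E → ℝ}

theorem variance_add_mul_le_of_ae [IsFiniteMeasure μ] (h : PoincareInequality μ C)
    (hu : LocallyLipschitz u) (hv : LocallyLipschitz v) (hgu : MemLp (gradient u) 2 μ)
    (hgv : MemLp (gradient v) 2 μ) {t : ℝ}
    (ht : ∀ᵐ x ∂μ, ‖gradient (fun x => u x + t * v x) x‖ ≤ ‖gradient u x + t • gradient v x‖) :
    Var[fun x => u x + t * v x; μ] ≤ C * ∫ x, ‖gradient u x + t • gradient v x‖ ^ 2 ∂μ := by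
  have hsum : MemLp (fun x => gradient u x + t • gradient v x) 2 μ := hgu.add (hgv.const_smul t)
  have hgrad := hsum.mono (measurable_gradient fun x => u x + t * v x).aestronglyMeasurable ht
  have hlip : LocallyLipschitz fun x => u x + t * v x :=
    hu.add ((lipschitzWith_smul t).locallyLipschitz.comp hv)
  refine (h _ hlip hgrad).2.trans (mul_le_mul_of_nonneg_left ?_ C.coe_nonneg)
  refine integral_mono_ae (hgrad.integrable_norm_pow two_ne_zero)
    (hsum.integrable_norm_pow two_ne_zero) ?_
  filter_upwards [ht] with x hx
  gcongr

/- Both sides are polynomials in `t`, and the inequality holds outside a countable set. -/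
theorem variance_add_mul_le [IsProbabilityMeasure μ] (h : PoincareInequality μ C)
    (hu : LocallyLipschitz u) (hv : LocallyLipschitz v) (hgu : MemLp (gradient u) 2 μ)
    (hgv : MemLp (gradient v) 2 μ) (t : ℝ) :
    Var[fun x => u x + t * v x; μ] ≤ C * ∫ x, ‖gradient u x + t • gradient v x‖ ^ 2 ∂μ := by
  let good : Set ℝ := {t | Var[fun x => u x + t * v x; μ] ≤
    C * ∫ x, ‖gradient u x + t • gradient v x‖ ^ 2 ∂μ}
  have closed_good : IsClosed good := by
    simp only [good, variance_add_mul (h u hu hgu).1 (h v hv hgv).1,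
      integral_norm_add_smul_sq hgu hgv]
    exact isClosed_le (by fun_prop) (by fun_prop)
  have dense_good : Dense good :=
    ((countable_not_ae_norm_gradient_add_mul_le u v).dense_compl ℝ).mono fun s hs =>
      h.variance_add_mul_le_of_ae hu hv hgu hgv (not_not.1 hs)
  exact closed_good.closure_eq.subset (dense_good t)

theorem sq_deficit_le [IsProbabilityMeasure μ] (h : PoincareInequality μ C)
    (hu : LocallyLipschitz u) (hv : LocallyLipschitz v) (hgu : MemLp (gradient u) 2 μ)
    (hgv : MemLp (gradient v) 2 μ) :
    (C * ∫ x, inner ℝ (gradient u x) (gradient v x) ∂μ - cov[u, v; μ]) ^ 2 ≤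
      (C * ∫ x, ‖gradient u x‖ ^ 2 ∂μ - Var[u; μ]) *
        (C * ∫ x, ‖gradient v x‖ ^ 2 ∂μ - Var[v; μ]) := by
  have nonneg : ∀ t : ℝ, 0 ≤ (C * ∫ x, ‖gradient v x‖ ^ 2 ∂μ - Var[v; μ]) * (t * t)
      + 2 * (C * ∫ x, inner ℝ (gradient u x) (gradient v x) ∂μ - cov[u, v; μ]) * t
      + (C * ∫ x, ‖gradient u x‖ ^ 2 ∂μ - Var[u; μ]) := fun t => by
    have le := h.variance_add_mul_le hu hv hgu hgv t
    rw [variance_add_mul (h u hu hgu).1 (h v hv hgv).1, integral_norm_add_smul_sq hgu hgv] at le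
    linarith
  have discrim_le := discrim_le_zero nonneg
  rw [discrim] at discrim_le
  linarith

/- This is the inequality for the slices `U (·, y)` together with the one for their mean. The mean
need not be locally Lipschitz, so the inequality is applied to `U (·, y₁) + U (·, y₂)` instead and
averaged over the pairs `(y₁, y₂)`. -/
theorem variance_add_variance_integral_le [IsProbabilityMeasure μ] [IsProbabilityMeasure ρ]
    (h : PoincareInequality μ C) (hlip : ∀ y, LocallyLipschitz fun x => U (x, y))
    (hU : MemLp U 2 (μ.prod ρ))
    (hgrad : MemLp (fun p : E × β => gradient (fun x => U (x, p.2)) p.1) 2 (μ.prod ρ)) :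
    Var[U; μ.prod ρ] + Var[fun x => ∫ y, U (x, y) ∂ρ; μ] ≤ Var[fun y => ∫ x, U (x, y) ∂μ; ρ]
      + C * (∫ p, ‖gradient (fun x => U (x, p.2)) p.1‖ ^ 2 ∂(μ.prod ρ)
        + ∫ x, ‖∫ y, gradient (fun x => U (x, y)) x ∂ρ‖ ^ 2 ∂μ) := by
  have slices := ae_memLp_prodMk_left hgrad
  have two_point : ∀ᵐ q ∂(ρ.prod ρ), Var[fun x => U (x, q.1) + U (x, q.2); μ] ≤
      C * ∫ x, ‖gradient (fun x => U (x, q.1)) x + gradient (fun x => U (x, q.2)) x‖ ^ 2 ∂μ := by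
    filter_upwards [Measure.quasiMeasurePreserving_fst.ae slices,
      Measure.quasiMeasurePreserving_snd.ae slices] with q h₁ h₂
    simpa only [one_mul, one_smul] using
      h.variance_add_mul_le (hlip q.1) (hlip q.2) h₁ h₂ 1
  have hpair := (memLp_prod_fst_add_snd hgrad).integrable_norm_pow two_ne_zero
  have averaged := integral_mono_of_nonneg (.of_forall fun q => variance_nonneg _ _)
    (hpair.integral_prod_right.const_mul (C : ℝ)) two_point
  rw [integral_variance_add_prodMk hU, integral_const_mul,
    integral_integral_norm_add_sq hgrad] at averaged
  linarith

end PoincareInequality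

end PoincareInequality

section DoublingLaw

open scoped NNReal

variable {E : Type*} [NormedAddCommGroup E] [InnerProductSpace ℝ E] [MeasurableSpace E]

/-- The law of `(X + Y) / √2` for independent `X` and `Y` of law `μ`. -/
noncomputable def doublingLaw (μ : Measure E) : Measure E :=
  (μ.prod μ).map fun p => (√2)⁻¹ • (p.1 + p.2)

variable [BorelSpace E] [SecondCountableTopology E] {μ : Measure E}

theorem measurePreserving_doublingLaw :
    MeasurePreserving (fun p : E × E => (√2)⁻¹ • (p.1 + p.2)) (μ.prod μ) (doublingLaw μ) :=
  ⟨by fun_prop, rfl⟩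

instance [IsProbabilityMeasure μ] : IsProbabilityMeasure (doublingLaw μ) :=
  Measure.isProbabilityMeasure_map (by fun_prop)

theorem integral_doublingLaw {F : Type*} [NormedAddCommGroup F] [NormedSpace ℝ F] {g : E → F}
    (hg : AEStronglyMeasurable g (doublingLaw μ)) :
    ∫ z, g z ∂(doublingLaw μ) = ∫ p, g ((√2)⁻¹ • (p.1 + p.2)) ∂(μ.prod μ) :=
  integral_map (by fun_prop) hg

theorem charFun_doublingLaw [IsProbabilityMeasure μ] (t : E) :
    charFun (doublingLaw μ) t = charFun μ ((√2)⁻¹ • t) ^ 2 := by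
  have hmap : doublingLaw μ = (μ ∗ μ).map fun y => (√2)⁻¹ • y := by
    rw [Measure.conv, Measure.map_map (by fun_prop) (by fun_prop)]
    rfl
  rw [hmap, charFun_map_smul, charFun_conv, sq]

variable [CompleteSpace E] {C : ℝ≥0} {f : E → ℝ}

theorem memLp_gradient_comp_doublingMap [SFinite μ] (hgrad : MemLp (gradient f) 2 (doublingLaw μ)) :
    MemLp (fun p : E × E => gradient (fun x => f ((√2)⁻¹ • (x + p.2))) p.1) 2 (μ.prod μ) := by
  simp_rw [gradient_comp_smul_add]
  exact (hgrad.comp_measurePreserving measurePreserving_doublingLaw).const_smul (√2)⁻¹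

namespace PoincareInequality

theorem memLp_comp_doublingMap [IsProbabilityMeasure μ] (h : PoincareInequality μ C)
    (hf : LocallyLipschitz f) (hgrad : MemLp (gradient f) 2 (doublingLaw μ)) :
    MemLp (fun p : E × E => f ((√2)⁻¹ • (p.1 + p.2))) 2 (μ.prod μ) := by
  have hmeas : Measurable fun p : E × E => f ((√2)⁻¹ • (p.1 + p.2)) :=
    hf.continuous.measurable.comp (by fun_prop)
  have slices := h.lintegral_evariance_ne_top (U := fun p => f ((√2)⁻¹ • (p.1 + p.2)))
    (locallyLipschitz_comp_smul_add hf _) (memLp_gradient_comp_doublingMap hgrad)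
  refine memLp_prod_of_lintegral_evariance_ne_top hmeas ?_ slices
  simpa only [add_comm] using slices

theorem variance_doublingLaw_le [IsProbabilityMeasure μ] (h : PoincareInequality μ C)
    (hf : LocallyLipschitz f) (hgrad : MemLp (gradient f) 2 (doublingLaw μ)) :
    Var[f; doublingLaw μ] ≤ C * (3 / 4 * ∫ x, ‖gradient f x‖ ^ 2 ∂(doublingLaw μ)
      + 1 / 4 * ‖∫ x, gradient f x ∂(doublingLaw μ)‖ ^ 2) := by
  have hcomp := hgrad.comp_measurePreserving measurePreserving_doublingLaw
  have slices := h.variance_add_variance_integral_le (U := fun p => f ((√2)⁻¹ • (p.1 + p.2)))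
    (locallyLipschitz_comp_smul_add hf _) (h.memLp_comp_doublingMap hf hgrad)
    (memLp_gradient_comp_doublingMap hgrad)
  have mean_symm : (fun y => ∫ x, f ((√2)⁻¹ • (x + y)) ∂μ) =
      fun x => ∫ y, f ((√2)⁻¹ • (x + y)) ∂μ := funext fun y => by simp only [add_comm]
  have mean_gradient_symm : ∫ y, ‖∫ x, gradient f ((√2)⁻¹ • (x + y)) ∂μ‖ ^ 2 ∂μ =
      ∫ x, ‖∫ y, gradient f ((√2)⁻¹ • (x + y)) ∂μ‖ ^ 2 ∂μ := by
    simp only [add_comm]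
  have mean_gradient := integral_norm_integral_sq_add_le
    (f := fun p : E × E => gradient f ((√2)⁻¹ • (p.1 + p.2))) hcomp
  have norm_sq : ‖(√2)⁻¹‖ ^ 2 = 1 / 2 := by simp
  have hsq : AEStronglyMeasurable (fun x => ‖gradient f x‖ ^ 2) (doublingLaw μ) :=
    hgrad.1.norm.pow 2
  simp only [gradient_comp_smul_add, norm_smul, mul_pow, integral_smul, integral_const_mul,
    norm_sq, mean_symm] at slices
  rw [mean_gradient_symm] at mean_gradient
  rw [← measurePreserving_doublingLaw.variance_fun_comp hf.continuous.aemeasurable,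
    integral_doublingLaw hsq, integral_doublingLaw hgrad.1]
  linarith [mul_le_mul_of_nonneg_left mean_gradient C.coe_nonneg]

protected theorem doublingLaw [IsProbabilityMeasure μ] (h : PoincareInequality μ C) :
    PoincareInequality (doublingLaw μ) C := fun f hf hgrad => by
  refine ⟨(memLp_map_measure_iff hf.continuous.aestronglyMeasurable (by fun_prop)).2
    (h.memLp_comp_doublingMap hf hgrad), (h.variance_doublingLaw_le hf hgrad).trans ?_⟩
  gcongr
  linarith [norm_integral_sq_le hgrad]

end PoincareInequality

end DoublingLaw

section UnitCovariance

open scoped NNReal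

variable {E : Type*} [NormedAddCommGroup E] [InnerProductSpace ℝ E] [MeasurableSpace E]

/-- `μ` has finite second moment and its covariance operator is the identity; unlike in
`IsIsotropic`, the mean is arbitrary. -/
def HasUnitCovariance (μ : Measure E) : Prop :=
  MemLp id 2 μ ∧ ∀ b : E, Var[fun x => inner ℝ b x; μ] = ‖b‖ ^ 2

variable [BorelSpace E] [SecondCountableTopology E] {μ : Measure E} {K : ℝ≥0} {f : E → ℝ}

protected theorem HasUnitCovariance.doublingLaw [IsProbabilityMeasure μ] (h : HasUnitCovariance μ) :
    HasUnitCovariance (doublingLaw μ) := by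
  refine ⟨(memLp_map_measure_iff (by fun_prop) (by fun_prop)).2
    (((h.1.comp_fst μ).add (h.1.comp_snd μ)).const_smul (√2)⁻¹), fun b => ?_⟩
  have hb : MemLp (fun x => inner ℝ b x) 2 μ := h.1.const_inner b
  rw [← measurePreserving_doublingLaw.variance_fun_comp (by fun_prop)]
  simp only [inner_smul_right, inner_add_right]
  rw [variance_const_mul, variance_add_prod hb hb, h.2 b, inv_pow, Real.sq_sqrt zero_le_two]
  ring

variable [CompleteSpace E]

theorem PoincareInequality.mul_norm_integral_gradient_le [IsProbabilityMeasure μ]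
    (h : PoincareInequality μ K) (hcov : HasUnitCovariance μ) (hf : LocallyLipschitz f)
    (hgrad : MemLp (gradient f) 2 μ) :
    K * ‖∫ x, gradient f x ∂μ‖ ≤
      √Var[f; μ] + √((K * ∫ x, ‖gradient f x‖ ^ 2 ∂μ - Var[f; μ]) * (K - 1)) := by
  set b := ∫ x, gradient f x ∂μ
  obtain hzero | hpos := (norm_nonneg b).eq_or_lt
  · rw [← hzero, mul_zero]
    positivity
  have hlin : LocallyLipschitz fun x => inner ℝ b x := (innerSL ℝ b).lipschitz.locallyLipschitz
  have hlin_grad : MemLp (gradient fun x => inner ℝ b x) 2 μ := by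
    simp only [funext (gradient_inner b)]
    exact memLp_const b
  have covariance_le := Real.abs_le_sqrt
    (sq_covariance_le (h f hf hgrad).1 (h _ hlin hlin_grad).1)
  have deficit_le := Real.abs_le_sqrt (h.sq_deficit_le hf hlin hgrad hlin_grad)
  have mean_inner : ∫ x, inner ℝ (gradient f x) b ∂μ = ‖b‖ ^ 2 := by
    simp_rw [real_inner_comm b]
    rw [integral_inner (hgrad.integrable one_le_two), real_inner_self_eq_norm_sq]
  simp only [gradient_inner, mean_inner, integral_const, probReal_univ, one_smul, hcov.2 b]
    at deficit_le covariance_le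
  rw [← sub_one_mul, ← mul_assoc] at deficit_le
  rw [Real.sqrt_mul' _ (sq_nonneg _), Real.sqrt_sq hpos.le] at deficit_le covariance_le
  refine le_of_mul_le_mul_right ?_ hpos
  linarith [le_abs_self cov[f, fun x => inner ℝ b x; μ],
    le_abs_self (K * ‖b‖ ^ 2 - cov[f, fun x => inner ℝ b x; μ])]

end UnitCovariance

section RayleighQuotients

open scoped NNReal

variable {E : Type*} [NormedAddCommGroup E] [InnerProductSpace ℝ E] [CompleteSpace E]
  [MeasurableSpace E]

/-- The quotients `Var(f) / ∫ ‖∇f‖²` over the locally Lipschitz functions `f` with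
`0 < ∫ ‖∇f‖² < ∞`, whose supremum is the optimal constant in the Poincaré inequality. -/
def rayleighQuotients (μ : Measure E) : Set ℝ :=
  {r | ∃ f : E → ℝ, LocallyLipschitz f ∧ MemLp (gradient f) 2 μ ∧
    0 < ∫ x, ‖gradient f x‖ ^ 2 ∂μ ∧ r = Var[f; μ] / ∫ x, ‖gradient f x‖ ^ 2 ∂μ}

theorem isLUB_rayleighQuotients {μ : Measure E} {K : ℝ≥0} (hK : 0 < K)
    (hleast : IsLeast {C | PoincareInequality μ C} K) : IsLUB (rayleighQuotients μ) K := by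
  refine ⟨?_, fun r hr => ?_⟩
  · rintro _ ⟨f, hf, hgrad, hpos, rfl⟩
    exact (div_le_iff₀ hpos).2 (hleast.1 f hf hgrad).2
  · have hle : PoincareInequality μ r.toNNReal := fun f hf hgrad => by
      obtain ⟨hmem, hvar⟩ := hleast.1 f hf hgrad
      refine ⟨hmem, ?_⟩
      have hnonneg : 0 ≤ ∫ x, ‖gradient f x‖ ^ 2 ∂μ := integral_nonneg fun x => by positivity
      obtain hzero | hpos := hnonneg.eq_or_lt
      · rwa [← hzero, mul_zero] at hvar ⊢
      · exact (div_le_iff₀ hpos).1 ((hr ⟨f, hf, hgrad, hpos, rfl⟩).trans r.le_coe_toNNReal)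
    exact (Real.le_toNNReal_iff_coe_le' hK).1 (hleast.2 hle)

variable [BorelSpace E] [SecondCountableTopology E] {μ : Measure E} [IsProbabilityMeasure μ]
  {C K : ℝ≥0}

theorem PoincareInequality.sq_mul_rayleighQuotient_le (h : PoincareInequality μ C)
    (hdoubling : PoincareInequality (doublingLaw μ) K) (hcov : HasUnitCovariance μ) {r : ℝ}
    (hr : r ∈ rayleighQuotients (doublingLaw μ)) :
    (K : ℝ) ^ 2 * r ≤ C * (3 / 4 * K ^ 2 + 1 / 4 * (√r + √((K - r) * (K - 1))) ^ 2) := by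
  obtain ⟨f, hf, hgrad, hpos, hr⟩ := hr
  set D := ∫ x, ‖gradient f x‖ ^ 2 ∂(doublingLaw μ)
  have hvar : Var[f; doublingLaw μ] = r * D := (div_eq_iff hpos.ne').1 hr.symm
  have variance_le := h.variance_doublingLaw_le hf hgrad
  have mean_le := hdoubling.mul_norm_integral_gradient_le hcov.doublingLaw hf hgrad
  rw [hvar, ← sub_mul, mul_right_comm, Real.sqrt_mul' _ hpos.le, Real.sqrt_mul' _ hpos.le,
    ← add_mul] at mean_le
  have mean_sq_le := pow_le_pow_left₀ (by positivity) mean_le 2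
  rw [mul_pow, mul_pow, Real.sq_sqrt hpos.le] at mean_sq_le
  refine le_of_mul_le_mul_right ?_ hpos
  calc (K : ℝ) ^ 2 * r * D = K ^ 2 * Var[f; doublingLaw μ] := by rw [hvar, mul_assoc]
    _ ≤ K ^ 2 * (C * (3 / 4 * D + 1 / 4 * ‖∫ x, gradient f x ∂(doublingLaw μ)‖ ^ 2)) := by gcongr
    _ = C * (3 / 4 * K ^ 2 * D + 1 / 4 * (K ^ 2 * ‖∫ x, gradient f x ∂(doublingLaw μ)‖ ^ 2)) := by
      ring
    _ ≤ C * (3 / 4 * K ^ 2 * D + 1 / 4 * ((√r + √((K - r) * (K - 1))) ^ 2 * D)) := by gcongr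
    _ = C * (3 / 4 * K ^ 2 + 1 / 4 * (√r + √((K - r) * (K - 1))) ^ 2) * D := by ring

theorem PoincareInequality.sq_le_of_isLeast_doublingLaw (h : PoincareInequality μ C)
    (hcov : HasUnitCovariance μ) (hleast : IsLeast {C | PoincareInequality (doublingLaw μ) C} K) :
    (K : ℝ) ^ 2 ≤ C * (3 / 4 * K + 1 / 4) := by
  obtain rfl | hK := eq_zero_or_pos K
  · rw [NNReal.coe_zero, zero_pow two_ne_zero]
    positivity
  have hlub := isLUB_rayleighQuotients hK hleast
  have hclosed : IsClosed {r : ℝ | (K : ℝ) ^ 2 * r ≤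
      C * (3 / 4 * K ^ 2 + 1 / 4 * (√r + √((K - r) * (K - 1))) ^ 2)} :=
    isClosed_le (by fun_prop) (by fun_prop)
  have hmem := hclosed.closure_subset_iff.2
    (fun r hr => h.sq_mul_rayleighQuotient_le hleast.1 hcov hr) (hlub.mem_closure hlub.nonempty)
  simp only [Set.mem_ofPred_eq, sub_self, zero_mul, Real.sqrt_zero, add_zero,
    Real.sq_sqrt K.coe_nonneg] at hmem
  have hK' : (0 : ℝ) < K := hK
  refine le_of_mul_le_mul_right ?_ hK'
  linarith

theorem PoincareInequality.le_of_isLeast_doublingLaw (h : PoincareInequality μ C)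
    (hcov : HasUnitCovariance μ) (hleast : IsLeast {C | PoincareInequality (doublingLaw μ) C} K) :
    (K : ℝ) ≤ 3 / 4 * C + 1 / 3 := by
  nlinarith [h.sq_le_of_isLeast_doublingLaw hcov hleast, C.coe_nonneg, K.coe_nonneg]

end RayleighQuotients

section Euclidean

variable {d : ℕ} {μ : Measure (EuclideanSpace ℝ (Fin d))}

theorem PoincareInequality.poincareConst_le [IsFiniteMeasure μ] {C : NNReal}
    (h : PoincareInequality μ C) : poincareConst μ ≤ C := by
  refine ENNReal.le_of_forall_pos_le_add fun ε hε _ => sInf_le fun f hf => ?_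
  by_cases henergy : ∫⁻ x, ‖gradient f x‖₊ ^ 2 ∂μ = ∞
  · rw [henergy, ENNReal.mul_top (by positivity)]
    exact le_top
  · have hgrad : MemLp (gradient f) 2 μ :=
      (memLp_two_iff_lintegral_ne_top (measurable_gradient f).aestronglyMeasurable).2 henergy
    have hle := (evariance_le_mul_lintegral_iff hf.continuous.aestronglyMeasurable hgrad C).2
      (h f hf hgrad)
    exact hle.trans (by gcongr; exact le_self_add)

theorem isLeast_poincareConst [IsFiniteMeasure μ] (hp : poincareConst μ ≠ ⊤) :
    IsLeast {C | PoincareInequality μ C} (poincareConst μ).toNNReal := by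
  refine ⟨fun f hf hgrad => ?_, fun C h =>
    ENNReal.toNNReal_mono ENNReal.coe_ne_top h.poincareConst_le⟩
  rw [← evariance_le_mul_lintegral_iff hf.continuous.aestronglyMeasurable hgrad,
    ENNReal.coe_toNNReal hp]
  have henergy := (memLp_two_iff_lintegral_ne_top hgrad.1).1 hgrad
  obtain hzero | hpos := eq_or_ne (∫⁻ x, ‖gradient f x‖₊ ^ 2 ∂μ) 0
  · obtain ⟨C, hC, -⟩ := sInf_lt_iff.1 (lt_top_iff_ne_top.2 hp)
    simpa only [hzero, mul_zero] using hC f hf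
  · rw [← ENNReal.div_le_iff_le_mul (.inl hpos) (.inl henergy)]
    exact le_sInf fun C hC => (ENNReal.div_le_iff_le_mul (.inl hpos) (.inl henergy)).2 (hC f hf)

theorem poincareConst_doublingLaw_le [IsProbabilityMeasure μ] (hcov : HasUnitCovariance μ)
    (hp : poincareConst μ ≠ ⊤) : poincareConst (doublingLaw μ) ≠ ⊤ ∧
      (poincareConst (doublingLaw μ)).toReal ≤ 3 / 4 * (poincareConst μ).toReal + 1 / 3 := by
  have h := (isLeast_poincareConst hp).1
  have hfin := ne_top_of_le_ne_top ENNReal.coe_ne_top h.doublingLaw.poincareConst_le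
  exact ⟨hfin, h.le_of_isLeast_doublingLaw hcov (isLeast_poincareConst hfin)⟩

theorem IsIsotropic.integral_inner_sq (h : IsIsotropic μ) (b : EuclideanSpace ℝ (Fin d)) :
    ∫ x, inner ℝ b x ^ 2 ∂μ = ‖b‖ ^ 2 := by
  have hid : MemLp id 2 μ := (memLp_two_iff_integrable_sq_norm aestronglyMeasurable_id).2 h.1
  have hcoord : ∀ i, MemLp (fun x : EuclideanSpace ℝ (Fin d) => x i) 2 μ := fun i =>
    (EuclideanSpace.proj (𝕜 := ℝ) i).comp_memLp' hid
  have hint : ∀ i j, Integrable (fun x : EuclideanSpace ℝ (Fin d) => b i * b j * (x i * x j)) μ :=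
    fun i j => ((hcoord i).integrable_mul (hcoord j)).const_mul _
  have expand : ∀ x, inner ℝ b x ^ 2 = ∑ i, ∑ j, b i * b j * (x i * x j) := fun x => by
    simp only [PiLp.inner_apply, RCLike.inner_apply, conj_trivial, sq, Finset.sum_mul_sum,
      mul_mul_mul_comm, mul_comm]
  simp_rw [expand]
  rw [integral_finsetSum _ fun i _ => integrable_finsetSum _ fun j _ => hint i j]
  simp_rw [integral_finsetSum Finset.univ fun j _ => hint _ j, integral_const_mul, h.2.2,
    mul_ite, mul_one, mul_zero, Finset.sum_ite_eq, Finset.mem_univ, if_true,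
    EuclideanSpace.real_norm_sq_eq, ← sq]

theorem IsIsotropic.hasUnitCovariance [IsProbabilityMeasure μ] (h : IsIsotropic μ) :
    HasUnitCovariance μ := by
  have hid : MemLp id 2 μ := (memLp_two_iff_integrable_sq_norm aestronglyMeasurable_id).2 h.1
  refine ⟨hid, fun b => ?_⟩
  have mean : ∫ x, inner ℝ b x ∂μ = 0 := by
    rw [integral_inner (f := fun x => x) (hid.integrable one_le_two), h.2.1, inner_zero_right]
  rw [variance_of_integral_eq_zero (by fun_prop) mean, h.integral_inner_sq b]

variable [IsProbabilityMeasure μ]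

theorem charFun_stdSumLaw (n : ℕ) (t : EuclideanSpace ℝ (Fin d)) :
    charFun (stdSumLaw μ n) t = charFun μ ((√n)⁻¹ • t) ^ n := by
  have hmap : stdSumLaw μ n = ((Measure.pi fun _ : Fin n => μ).map fun x => ∑ i, x i).map
      fun y => (√n)⁻¹ • y := by
    rw [Measure.map_map (by fun_prop) (by fun_prop)]
    rfl
  rw [hmap, charFun_map_smul, charFun_map_sum_pi_eq_prod, Finset.prod_const, Finset.card_univ,
    Fintype.card_fin, Pi.pow_apply]

instance isProbabilityMeasure_stdSumLaw (n : ℕ) : IsProbabilityMeasure (stdSumLaw μ n) :=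
  Measure.isProbabilityMeasure_map (by fun_prop)

theorem stdSumLaw_one : stdSumLaw μ 1 = μ :=
  Measure.ext_of_charFun <| funext fun t => by simp [charFun_stdSumLaw]

theorem stdSumLaw_mul_two (n : ℕ) : stdSumLaw μ (n * 2) = doublingLaw (stdSumLaw μ n) :=
  Measure.ext_of_charFun <| funext fun t => by
    rw [charFun_doublingLaw, charFun_stdSumLaw, charFun_stdSumLaw, smul_smul, ← pow_mul]
    simp [mul_comm]

theorem HasUnitCovariance.stdSumLaw_two_pow (hcov : HasUnitCovariance μ) (n : ℕ) :
    HasUnitCovariance (stdSumLaw μ (2 ^ n)) := by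
  induction n with
  | zero => rwa [pow_zero, stdSumLaw_one]
  | succ n ih =>
    rw [pow_succ, stdSumLaw_mul_two]
    exact ih.doublingLaw

end Euclidean

theorem poincareConst_doubling_decay_general {d : ℕ} (ν₁ : Measure (EuclideanSpace ℝ (Fin d)))
    [IsProbabilityMeasure ν₁] (hcov : HasUnitCovariance ν₁) (hp : poincareConst ν₁ ≠ ⊤) (n : ℕ) :
    poincareConst (stdSumLaw ν₁ (2 ^ n)) ≠ ⊤ ∧
      (poincareConst (stdSumLaw ν₁ (2 ^ n))).toReal - 4 / 3 ≤
        (3 / 4 : ℝ) ^ n * ((poincareConst ν₁).toReal - 4 / 3) := by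
  induction n with
  | zero => simpa only [pow_zero, stdSumLaw_one, one_mul, le_refl, and_true] using hp
  | succ n ih =>
    obtain ⟨hfin, hle⟩ := poincareConst_doublingLaw_le (hcov.stdSumLaw_two_pow n) ih.1
    rw [pow_succ, stdSumLaw_mul_two, pow_succ]
    exact ⟨hfin, by linarith [ih.2]⟩

/-- **Fast initial convergence of the Poincaré constant along the CLT.** For i.i.d. isotropic
random vectors with law `ν₁` of finite Poincaré constant, the Poincaré constants of the
standardized sums `ν_{2^n}` satisfy `C_p(ν_{2^n}) − 3/2 ≤ (3/4)^n (C_p(ν₁) − 3/2)`. -/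
theorem poincareConst_doubling_decay {d : ℕ} (ν₁ : Measure (EuclideanSpace ℝ (Fin d)))
    [IsProbabilityMeasure ν₁] (hiso : IsIsotropic ν₁) (hp : poincareConst ν₁ ≠ ⊤) (n : ℕ) :
    poincareConst (stdSumLaw ν₁ (2 ^ n)) ≠ ⊤ ∧
      (poincareConst (stdSumLaw ν₁ (2 ^ n))).toReal - 3 / 2 ≤
        (3 / 4 : ℝ) ^ n * ((poincareConst ν₁).toReal - 3 / 2) := by
  obtain ⟨hfin, hle⟩ := poincareConst_doubling_decay_general ν₁ hiso.hasUnitCovariance hp n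
  exact ⟨hfin, by linarith [pow_le_one₀ (n := n) (by norm_num) (by norm_num : (3 / 4 : ℝ) ≤ 1)]⟩
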